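/- Let h ≥ 2 and 𝔭 a fixed prime element. Under the counting axiom, the number of h-full elements m with N(m) ≤ x and n_𝔭(m) ≥ 1 equals κ γ_h x^{1/h} / (N(𝔭)(1 − N(𝔭)^{−1/h} + N(𝔭)^{−1})) + O_h(x^{ν/h}/N(𝔭)^ν) for some ν < 1 independent of 𝔭. -/

import Mathlib

/-!
Every `h`-full `m` divisible by `𝔭` factors uniquely as `m = 𝔭 ^ h * a ^ h * d`, where `a` is
arbitrary and the remainder `d` has exponent in `[0, h)` at `𝔭` and in `{0} ∪ (h, 2h)` at every
other prime (divide each exponent of `m` by `h`; see `mem_range_assemble`, `assemble_injective`).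
Hence, with `X = x ^ (1/h) / N(𝔭)` and `A` the counting function of the whole monoid, the number
to be estimated is `∑_d A (X * N(d) ^ (-1/h))` (`hasSum_count`).

Since `A y = κ y + O(y ^ ν)` for all `y > 0` as soon as `θ ≤ ν < 1` (`cnt_bound`), this is
`κ X ∑_d N(d) ^ (-1/h) + O(X ^ ν ∑_d N(d) ^ (-ν/h))`. Both series are Euler products
(`hasSum_euler`), which converge for `ν > h / (h + 1)` because away from `𝔭` the nonzero exponents of `d`
are at least `h + 1` and `∑_q N(q) ^ (-σ)` converges for `σ > 1` (`summable_primes`). The prime `𝔭`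
affects only one local factor. In the main term this produces `1 / (1 - u + u ^ h)` with
`u = N(𝔭) ^ (-1/h)` (`ratio_eq`), and in the error term it costs at most a factor `h`, which gives
uniformity in `𝔭`.
-/

open Filter

/-- The norm of an element of the free abelian monoid on `P`. -/
def mnorm {P : Type*} (N : P → ℕ) (m : P →₀ ℕ) : ℕ :=
  m.prod fun p k => N p ^ k

/-! ### Euler products over the free monoid -/

/-- Euler product for the free abelian monoid with exponents restricted to `T q` at the prime `q`. -/
lemma hasSum_euler {P : Type*} (u : P → ℝ) (hu : ∀ q, 0 ≤ u q) (T : P → Finset ℕ)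
    (hT : ∀ q, 0 ∈ T q) (G : ℝ) (hG : HasProd (fun q => ∑ k ∈ T q, u q ^ k) G) :
    HasSum (fun d : {d : P →₀ ℕ // ∀ q, d q ∈ T q} => d.1.prod fun q k => u q ^ k) G := by
  classical
  have h0 : ∀ d : P →₀ ℕ, 0 ≤ d.prod fun q k => u q ^ k := fun d =>
    Finset.prod_nonneg fun q _ => pow_nonneg (hu q) _
  have hL : ∀ q, 1 ≤ ∑ k ∈ T q, u q ^ k := fun q => by
    have := Finset.single_le_sum (f := fun k => u q ^ k) (fun k _ => pow_nonneg (hu q) k) (hT q)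
    simpa using this
  have hmono : Monotone fun S : Finset P => ∏ q ∈ S, ∑ k ∈ T q, u q ^ k := by
    intro S S' hS
    exact Finset.prod_le_prod_of_subset_of_one_le hS
      (fun q _ => zero_le_one.trans (hL q)) (fun q _ _ => hL q)
  have hle : ∀ S : Finset P, ∏ q ∈ S, ∑ k ∈ T q, u q ^ k ≤ G := fun S =>
    hmono.ge_of_tendsto hG S
  -- the finite Euler product over `S` is a partial sum over elements supported in `S`
  have hfin : ∀ S : Finset P, ∑ d ∈ S.finsupp T, (d.prod fun q k => u q ^ k)
      = ∏ q ∈ S, ∑ k ∈ T q, u q ^ k := by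
    intro S
    rw [Finset.prod_sum, Finset.finsupp, Finset.sum_map]
    refine Finset.sum_congr rfl fun f _ => ?_
    rw [Function.Embedding.coeFn_mk, Finsupp.prod_of_support_subset (s := S) _
      (Finsupp.support_indicator_subset S f) _ (fun _ _ => pow_zero _), ← Finset.prod_attach]
    refine Finset.prod_congr rfl fun q _ => ?_
    rw [Finsupp.indicator_of_mem q.2]
  have hmem : ∀ (S : Finset P) (d : P →₀ ℕ), d ∈ S.finsupp T → ∀ q, d q ∈ T q := by
    intro S d hd q
    rw [Finset.mem_finsupp_iff] at hd
    by_cases hq : q ∈ S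
    · exact hd.2 q hq
    · rw [Finsupp.notMem_support_iff.1 fun h => hq (hd.1 h)]
      exact hT q
  refine hasSum_of_isLUB_of_nonneg G (fun d => h0 d.1) ⟨?_, ?_⟩
  · rintro _ ⟨F, rfl⟩
    refine le_trans ?_ (hle (F.biUnion fun d => d.1.support))
    rw [← hfin]
    refine le_of_eq_of_le (Finset.sum_map F (Function.Embedding.subtype _)
      (fun d : P →₀ ℕ => d.prod fun q k => u q ^ k)).symm ?_
    apply Finset.sum_le_sum_of_subset_of_nonneg
    · intro d hd
      obtain ⟨d', hd', rfl⟩ := Finset.mem_map.1 hd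
      rw [Finset.mem_finsupp_iff]
      exact ⟨Finset.subset_biUnion_of_mem (fun d : {d : P →₀ ℕ // ∀ q, d q ∈ T q} => d.1.support)
        hd', fun q _ => d'.2 q⟩
    · intro d _ _
      exact h0 d
  · intro B hB
    refine le_of_tendsto' hG fun S => ?_
    rw [← hfin]
    refine le_of_eq_of_le (Finset.sum_subtype_of_mem
      (fun d : P →₀ ℕ => d.prod fun q k => u q ^ k) (hmem S)).symm ?_
    exact hB ⟨(S.finsupp T).subtype _, rfl⟩

/-! ### Norms and the counting function -/

/-- The number of elements of norm at most `y`. -/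
noncomputable def cnt {P : Type*} (N : P → ℕ) (y : ℝ) : ℝ :=
  ({m : P →₀ ℕ | (mnorm N m : ℝ) ≤ y}.ncard : ℝ)

lemma one_le_mnorm {P : Type*} (N : P → ℕ) (hN : ∀ p, 1 < N p) (m : P →₀ ℕ) :
    1 ≤ mnorm N m :=
  Finset.one_le_prod' fun p _ => Nat.one_le_pow _ _ (zero_lt_one.trans (hN p))

lemma mnorm_add {P : Type*} (N : P → ℕ) (a b : P →₀ ℕ) :
    mnorm N (a + b) = mnorm N a * mnorm N b := by
  classical
  exact Finsupp.prod_add_index' (by simp) (fun _ _ _ => pow_add _ _ _)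

lemma mnorm_nsmul {P : Type*} (N : P → ℕ) (n : ℕ) (a : P →₀ ℕ) :
    mnorm N (n • a) = mnorm N a ^ n := by
  induction n with
  | zero => simp [mnorm]
  | succ n ih => rw [succ_nsmul, mnorm_add, ih, pow_succ]

lemma mnorm_single {P : Type*} (N : P → ℕ) (p : P) : mnorm N (Finsupp.single p 1) = N p := by
  simp [mnorm]

lemma rpow_mnorm {P : Type*} (N : P → ℕ) (d : P →₀ ℕ) (s : ℝ) :
    (mnorm N d : ℝ) ^ s = d.prod fun q k => ((N q : ℝ) ^ s) ^ k := by
  rw [mnorm, Finsupp.prod, Nat.cast_prod, ← Real.finsetProd_rpow _ _ (fun _ _ => by positivity)]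
  refine Finset.prod_congr rfl fun q _ => ?_
  rw [Nat.cast_pow]
  exact (Real.rpow_pow_comm (Nat.cast_nonneg _) _ _).symm

/-- The primes are sparse enough for `∑ N(q)^{-σ}` to converge for `σ > 1`, by splitting them
dyadically according to their norm. -/
lemma summable_primes {P : Type*} (N : P → ℕ) (hN : ∀ p, 1 < N p) (K : ℝ)
    (hfin : ∀ x : ℝ, 1 ≤ x → {m : P →₀ ℕ | (mnorm N m : ℝ) ≤ x}.Finite ∧ cnt N x ≤ K * x)
    (σ : ℝ) (hσ : 1 < σ) : Summable fun q : P => (N q : ℝ) ^ (-σ) := by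
  classical
  set r : ℝ := 2 ^ (1 - σ) with hr
  have hr0 : 0 < r := by positivity
  have hr1 : r < 1 := Real.rpow_lt_one_of_one_lt_of_neg (by norm_num) (by linarith)
  have hK : 0 ≤ K := by
    have := (hfin 1 le_rfl).2
    have h2 : 0 ≤ cnt N 1 := Nat.cast_nonneg _
    linarith
  have hgeo : Summable fun n : ℕ => 2 * K * r ^ n :=
    (summable_geometric_of_lt_one hr0.le hr1).mul_left _
  refine summable_of_sum_le (c := ∑' n : ℕ, 2 * K * r ^ n) (fun q => by positivity) fun F => ?_
  rw [← Finset.sum_fiberwise_of_maps_to (s := F) (t := F.image fun q => Nat.log 2 (N q))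
    (g := fun q => Nat.log 2 (N q)) (fun q hq => Finset.mem_image_of_mem _ hq)]
  refine le_trans (Finset.sum_le_sum fun n _ => ?_)
    (hgeo.sum_le_tsum _ (fun n _ => by positivity))
  -- the primes `q` are counted among all elements through `q ↦ single q 1`
  have hcard : ((F.filter fun q => Nat.log 2 (N q) = n).card : ℝ) ≤ K * 2 ^ (n + 1) := by
    have h1 : (1 : ℝ) ≤ 2 ^ (n + 1) := one_le_pow₀ (by norm_num)
    refine le_trans ?_ (hfin _ h1).2
    rw [cnt, Nat.cast_le, ← Finset.card_map ⟨fun q : P => Finsupp.single q 1,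
      Finsupp.single_left_injective one_ne_zero⟩, ← Set.ncard_coe_finset]
    refine Set.ncard_le_ncard ?_ (hfin _ h1).1
    intro m hm
    simp only [Finset.coe_map, Set.mem_image, Finset.mem_coe, Finset.mem_filter,
      Function.Embedding.coeFn_mk] at hm
    obtain ⟨q, ⟨_, hq⟩, rfl⟩ := hm
    rw [Set.mem_ofPred_eq, mnorm_single]
    have := Nat.lt_pow_succ_log_self (b := 2) (by norm_num) (N q)
    rw [hq] at this
    exact_mod_cast this.le
  have hterm : ∀ q ∈ F.filter (fun q => Nat.log 2 (N q) = n),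
      (N q : ℝ) ^ (-σ) ≤ ((2 : ℝ) ^ n) ^ (-σ) := by
    intro q hq
    have hq := (Finset.mem_filter.1 hq).2
    apply Real.rpow_le_rpow_of_nonpos (by positivity) _ (by linarith)
    have := Nat.pow_log_le_self 2 (x := N q) (by have := hN q; omega)
    rw [hq] at this
    exact_mod_cast this
  refine (Finset.sum_le_card_nsmul _ _ _ hterm).trans ?_
  rw [nsmul_eq_mul]
  refine (mul_le_mul_of_nonneg_right hcard (by positivity)).trans (le_of_eq ?_)
  rw [hr, ← Real.rpow_pow_comm (by norm_num), sub_eq_add_neg, Real.rpow_add (by norm_num),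
    Real.rpow_one]
  ring

/-! ### Factorization of `h`-full elements -/

open Classical in
/-- Exponents allowed at the prime `q` for the remainder `d` in the unique factorization
`m = 𝔭 ^ h * a ^ h * d` of an `h`-full element `m` divisible by `𝔭`. -/
noncomputable def remExp {P : Type*} (h : ℕ) (𝔭 q : P) : Finset ℕ :=
  if q = 𝔭 then Finset.range h else insert 0 (Finset.Ico (h + 1) (2 * h))

lemma mem_remExp {P : Type*} {h : ℕ} {𝔭 q : P} {k : ℕ} :
    k ∈ remExp h 𝔭 q ↔ (q = 𝔭 ∧ k < h) ∨ (q ≠ 𝔭 ∧ (k = 0 ∨ h < k ∧ k < 2 * h)) := by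
  unfold remExp
  split_ifs with hq <;> simp [hq]

/-- The allowed remainders are pairwise incongruent modulo `h`. -/
lemma remExp_inj {P : Type*} {h : ℕ} {𝔭 q : P} {k l a b : ℕ}
    (hk : k ∈ remExp h 𝔭 q) (hl : l ∈ remExp h 𝔭 q) (he : h * a + k = h * b + l) : k = l := by
  have hmod : k ≡ l [MOD h] := by
    have := congrArg (· % h) he
    simpa [Nat.ModEq] using this
  rw [mem_remExp] at hk hl
  rcases hk with ⟨hq, hk⟩ | ⟨hq, hk⟩
  · rcases hl with ⟨_, hl⟩ | ⟨hq', _⟩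
    · exact hmod.eq_of_lt_of_lt hk hl
    · exact absurd hq hq'
  · rcases hl with ⟨hq', hl⟩ | ⟨_, hl⟩
    · exact absurd hq' hq
    · rcases hk with rfl | ⟨hk, hk'⟩ <;> rcases hl with rfl | ⟨hl, hl'⟩
      · rfl
      · obtain ⟨r, rfl⟩ := Nat.exists_eq_add_of_lt hl
        have h2 : 0 ≡ r + 1 [MOD h] := by simpa [Nat.ModEq, add_assoc] using hmod
        have := h2.eq_of_lt_of_lt (by omega) (by omega)
        omega
      · obtain ⟨r, rfl⟩ := Nat.exists_eq_add_of_lt hk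
        have h2 : r + 1 ≡ 0 [MOD h] := by simpa [Nat.ModEq, add_assoc] using hmod
        have := h2.eq_of_lt_of_lt (by omega) (by omega)
        omega
      · obtain ⟨r, rfl⟩ := Nat.exists_eq_add_of_lt hk
        obtain ⟨s, rfl⟩ := Nat.exists_eq_add_of_lt hl
        have h2 : r + 1 ≡ s + 1 [MOD h] := by simpa [Nat.ModEq, add_assoc] using hmod
        have := h2.eq_of_lt_of_lt (by omega) (by omega)
        omega

/-- Existence in the division with remainder underlying `m = 𝔭 ^ h * a ^ h * d`, at one prime. -/
lemma exists_exp {P : Type*} [DecidableEq P] {h : ℕ} (hh : 2 ≤ h) (𝔭 q : P) (n : ℕ)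
    (hn : n = 0 ∨ h ≤ n) (hp : q = 𝔭 → 1 ≤ n) :
    ∃ a k, k ∈ remExp h 𝔭 q ∧ h * a + (if q = 𝔭 then h else 0) + k = n := by
  have hdiv := Nat.div_add_mod n h
  have hlt := Nat.mod_lt n (show h > 0 by omega)
  by_cases hq : q = 𝔭
  · have hn' : h ≤ n := by have := hp hq; omega
    have h1 : 1 ≤ n / h := (Nat.one_le_div_iff (by omega)).2 hn'
    refine ⟨n / h - 1, n % h, mem_remExp.2 (Or.inl ⟨hq, hlt⟩), ?_⟩
    obtain ⟨c, hc⟩ := Nat.exists_eq_add_of_le h1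
    rw [if_pos hq]
    rw [hc] at hdiv ⊢
    rw [Nat.add_sub_cancel_left]
    linarith
  · by_cases hr : n % h = 0
    · exact ⟨n / h, 0, mem_remExp.2 (Or.inr ⟨hq, Or.inl rfl⟩), by rw [if_neg hq]; omega⟩
    · have hn' : h ≤ n := by
        rcases hn with rfl | hn
        · simp at hr
        · exact hn
      have h1 : 1 ≤ n / h := (Nat.one_le_div_iff (by omega)).2 hn'
      refine ⟨n / h - 1, h + n % h, mem_remExp.2 (Or.inr ⟨hq, Or.inr (by omega)⟩), ?_⟩
      obtain ⟨c, hc⟩ := Nat.exists_eq_add_of_le h1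
      rw [if_neg hq]
      rw [hc] at hdiv ⊢
      rw [Nat.add_sub_cancel_left]
      linarith

/-- The element `𝔭 ^ h * a ^ h * d`, written additively. -/
noncomputable def assemble {P : Type*} (h : ℕ) (𝔭 : P)
    (z : (_ : {d : P →₀ ℕ // ∀ q, d q ∈ remExp h 𝔭 q}) × (P →₀ ℕ)) : P →₀ ℕ :=
  h • z.2 + h • Finsupp.single 𝔭 1 + z.1.1

lemma assemble_apply {P : Type*} [DecidableEq P] (h : ℕ) (𝔭 : P)
    (z : (_ : {d : P →₀ ℕ // ∀ q, d q ∈ remExp h 𝔭 q}) × (P →₀ ℕ)) (q : P) :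
    assemble h 𝔭 z q = h * z.2 q + (if q = 𝔭 then h else 0) + z.1.1 q := by
  simp [assemble, Finsupp.single_apply, eq_comm]

lemma assemble_injective {P : Type*} {h : ℕ} (hh : 2 ≤ h) (𝔭 : P) :
    Function.Injective (assemble h 𝔭) := by
  classical
  rintro ⟨⟨d, hd⟩, a⟩ ⟨⟨d', hd'⟩, a'⟩ he
  have hq : ∀ q, d q = d' q ∧ a q = a' q := by
    intro q
    have h1 := DFunLike.congr_fun he q
    simp only [assemble_apply] at h1
    have h2 : d q = d' q := remExp_inj (a := a q) (b := a' q) (hd q) (hd' q) (by omega)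
    refine ⟨h2, Nat.eq_of_mul_eq_mul_left (show 0 < h by omega) (by omega)⟩
  obtain rfl : d = d' := Finsupp.ext fun q => (hq q).1
  obtain rfl : a = a' := Finsupp.ext fun q => (hq q).2
  rfl

lemma mem_range_assemble {P : Type*} {h : ℕ} (hh : 2 ≤ h) (𝔭 : P) (m : P →₀ ℕ) :
    m ∈ Set.range (assemble h 𝔭) ↔ (∀ p, m p = 0 ∨ h ≤ m p) ∧ 1 ≤ m 𝔭 := by
  classical
  constructor
  · rintro ⟨⟨⟨d, hd⟩, a⟩, rfl⟩
    constructor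
    · intro q
      rw [assemble_apply]
      have h1 := mem_remExp.1 (hd q)
      rcases Nat.eq_zero_or_pos (a q) with h0 | h0
      · by_cases hq : q = 𝔭
        · rw [if_pos hq]; right; omega
        · simp only [h0, if_neg hq]
          rcases h1 with h1 | h1
          · exact absurd h1.1 hq
          · omega
      · right
        have : h * 1 ≤ h * a q := Nat.mul_le_mul_left h h0
        dsimp only
        omega
    · rw [assemble_apply, if_pos rfl]
      omega
  · rintro ⟨hm, hp⟩
    choose a k hk he using fun q => exists_exp hh 𝔭 q (m q) (hm q) (fun hq => hq ▸ hp)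
    have hsupp : ∀ q, m q = 0 → a q = 0 ∧ k q = 0 := by
      intro q hq
      have h1 := he q
      rw [hq] at h1
      refine ⟨?_, by omega⟩
      have h2 : h * a q = 0 := by omega
      exact (Nat.mul_eq_zero.1 h2).resolve_left (by omega)
    refine ⟨⟨⟨Finsupp.onFinset m.support k fun q hq => Finsupp.mem_support_iff.2
      fun h0 => hq (hsupp q h0).2, hk⟩, Finsupp.onFinset m.support a fun q hq =>
      Finsupp.mem_support_iff.2 fun h0 => hq (hsupp q h0).1⟩, ?_⟩
    ext q
    rw [assemble_apply]
    exact he q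

lemma hasSum_ncard {α : Type*} (s : Set α) (hs : s.Finite) :
    HasSum (s.indicator fun _ => (1 : ℝ)) (s.ncard : ℝ) := by
  have h1 := hasSum_sum_of_ne_finset_zero (f := s.indicator fun _ => (1 : ℝ)) (s := hs.toFinset)
    (L := SummationFilter.unconditional α) (by simp +contextual)
  convert! h1 using 1
  rw [Set.ncard_eq_toFinset_card s hs, Finset.sum_congr rfl (g := fun _ => (1 : ℝ))]
  · simp
  · intro x hx
    simp [(Set.Finite.mem_toFinset hs).1 hx]

/-- Sorting the `h`-full elements divisible by `𝔭` by their remainder `d`. -/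
lemma hasSum_count {P : Type*} (N : P → ℕ) (hN : ∀ p, 1 < N p) {h : ℕ} (hh : 2 ≤ h)
    (hfin : ∀ y : ℝ, {m : P →₀ ℕ | (mnorm N m : ℝ) ≤ y}.Finite) (𝔭 : P) (x : ℝ) (hx : 0 ≤ x) :
    HasSum (fun d : {d : P →₀ ℕ // ∀ q, d q ∈ remExp h 𝔭 q} =>
      cnt N (x ^ (1 / (h : ℝ)) / N 𝔭 * (d.1.prod fun q k => ((N q : ℝ) ^ (-(1 / (h : ℝ)))) ^ k)))
      ({m : P →₀ ℕ | (∀ p, m p = 0 ∨ h ≤ m p) ∧ 1 ≤ m 𝔭 ∧ (mnorm N m : ℝ) ≤ x}.ncard : ℝ) := by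
  set S := {m : P →₀ ℕ | (∀ p, m p = 0 ∨ h ≤ m p) ∧ 1 ≤ m 𝔭 ∧ (mnorm N m : ℝ) ≤ x} with hS
  have hSfin : S.Finite := (hfin x).subset fun m hm => hm.2.2
  have h1 := hasSum_ncard S hSfin
  rw [← (assemble_injective hh 𝔭).hasSum_iff] at h1
  · refine h1.sigma fun d => ?_
    convert! hasSum_ncard _ (hfin _) using 1
    ext a
    simp only [Function.comp, Set.indicator]
    congr 1
    rw [eq_iff_iff]
    have hr := (mem_range_assemble hh 𝔭 (assemble h 𝔭 ⟨d, a⟩)).1 ⟨_, rfl⟩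
    have hd : (0 : ℝ) < mnorm N d.1 := by exact_mod_cast one_le_mnorm N hN d.1
    have hp : (0 : ℝ) < N 𝔭 := by exact_mod_cast zero_lt_one.trans (hN 𝔭)
    have hh0 : (h : ℝ) ≠ 0 := by positivity
    have hmem : assemble h 𝔭 ⟨d, a⟩ ∈ S ↔ (mnorm N (assemble h 𝔭 ⟨d, a⟩) : ℝ) ≤ x :=
      ⟨fun hm => hm.2.2, fun hm => ⟨hr.1, hr.2, hm⟩⟩
    rw [hmem, Set.mem_ofPred_eq, assemble, mnorm_add, mnorm_add, mnorm_nsmul, mnorm_nsmul,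
      mnorm_single, ← rpow_mnorm, Real.rpow_neg hd.le, ← div_eq_mul_inv, div_div,
      le_div_iff₀ (by positivity)]
    push_cast
    have hroot : ((mnorm N d.1 : ℝ) ^ (1 / (h : ℝ))) ^ h = mnorm N d.1 := by
      rw [one_div, Real.rpow_inv_natCast_pow hd.le (by omega)]
    have hxroot : (x ^ (1 / (h : ℝ))) ^ h = x := by
      rw [one_div, Real.rpow_inv_natCast_pow hx (by omega)]
    rw [← pow_le_pow_iff_left₀ (b := x ^ (1 / (h : ℝ))) (by positivity) (by positivity)
      (show h ≠ 0 by omega), hxroot, mul_pow, mul_pow, hroot, mul_assoc]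
  · intro m hm
    apply Set.indicator_of_notMem
    intro hmS
    exact hm ((mem_range_assemble hh 𝔭 m).2 ⟨hmS.1, hmS.2.1⟩)

/-! ### Local factors and convergence -/

/-- The local Euler factor, at a prime other than `𝔭`, of the sum over the remainders `d`. -/
noncomputable def locFactor (h : ℕ) (u : ℝ) : ℝ := 1 + ∑ k ∈ Finset.Ico (h + 1) (2 * h), u ^ k

lemma one_le_locFactor (h : ℕ) {u : ℝ} (hu : 0 ≤ u) : 1 ≤ locFactor h u := by
  unfold locFactor
  have : 0 ≤ ∑ k ∈ Finset.Ico (h + 1) (2 * h), u ^ k := Finset.sum_nonneg fun _ _ => by positivity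
  linarith

/-- The local factor at `q` of the sum over remainders, with the special role of `𝔭` isolated in a
multiplicative correction that is `1` at all other primes. -/
lemma sum_remExp {P : Type*} [DecidableEq P] (h : ℕ) (𝔭 q : P) (u : P → ℝ)
    (hu : ∀ q, 0 ≤ u q) :
    ∑ k ∈ remExp h 𝔭 q, u q ^ k = locFactor h (u q) *
      if q = 𝔭 then (∑ k ∈ Finset.range h, u 𝔭 ^ k) / locFactor h (u 𝔭) else 1 := by
  have := one_le_locFactor h (hu q)
  unfold remExp
  by_cases hq : q = 𝔭
  · subst hq
    rw [if_pos rfl, if_pos rfl, mul_div_cancel₀ _ (by positivity)]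
  · rw [if_neg hq, if_neg hq, Finset.sum_insert (by simp), locFactor]
    simp

/-- Closed form of the local factor, cleared of its denominator. -/
lemma one_sub_mul_locFactor {h : ℕ} (hh : 2 ≤ h) (u : ℝ) :
    (1 - u) * locFactor h u = (1 - u ^ h) * (1 - u + u ^ h) := by
  have := geom_sum_Ico_mul u (show h + 1 ≤ 2 * h by omega)
  rw [locFactor]
  have h2 : u ^ (2 * h) = u ^ h * u ^ h := by rw [two_mul, pow_add]
  have h3 : u ^ (h + 1) = u ^ h * u := pow_succ _ _
  rw [h2, h3] at this
  linear_combination -this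

/-- At `u = n ^ (-1/h)` the local factor is the one of `γ_h`. -/
lemma locFactor_eq {h : ℕ} (hh : 2 ≤ h) {n : ℝ} (hn : 1 < n) :
    locFactor h (n ^ (-(1 / (h : ℝ)))) =
      1 + (n - n ^ (1 / (h : ℝ))) / (n ^ 2 * (n ^ (1 / (h : ℝ)) - 1)) := by
  have hz1 : 1 < n ^ (1 / (h : ℝ)) := Real.one_lt_rpow hn (by positivity)
  have hzh : (n ^ (1 / (h : ℝ))) ^ h = n := by
    rw [one_div, Real.rpow_inv_natCast_pow (by linarith) (by omega)]
  rw [Real.rpow_neg (by linarith)]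
  set z := n ^ (1 / (h : ℝ))
  have hL := one_sub_mul_locFactor hh z⁻¹
  rw [inv_pow, hzh] at hL
  have h1 : 1 - z⁻¹ ≠ 0 := by
    have := inv_lt_one_of_one_lt₀ hz1
    linarith
  have h2 : z - 1 ≠ 0 := by linarith
  have h3 : z ≠ 0 := by linarith
  have h4 : n ≠ 0 := by linarith
  apply mul_left_cancel₀ h1
  rw [hL]
  field_simp
  ring

/-- The correction of the Euler product at `𝔭`. -/
lemma ratio_eq {h : ℕ} (hh : 2 ≤ h) {u : ℝ} (hu0 : 0 < u) (hu1 : u < 1) :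
    (∑ k ∈ Finset.range h, u ^ k) / locFactor h u = 1 / (1 - u + u ^ h) := by
  have h1 := one_le_locFactor h hu0.le
  have h2 : 0 < u ^ h := by positivity
  have h3 := one_sub_mul_locFactor hh u
  have h4 := mul_neg_geom_sum u h
  rw [div_eq_div_iff (by positivity) (by linarith)]
  apply mul_left_cancel₀ (show 1 - u ≠ 0 by linarith)
  linear_combination (1 - u + u ^ h) * h4 - h3

lemma rpow_pos_lt_one {n s : ℝ} (hn : 1 < n) (hs : 0 < s) : 0 < n ^ (-s) ∧ n ^ (-s) < 1 :=
  ⟨by positivity, Real.rpow_lt_one_of_one_lt_of_neg hn (by linarith)⟩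

/-- The Euler product over all primes converges for `s > 1 / (h + 1)`, because the remainders
away from `𝔭` have nonzero exponents at least `h + 1`. -/
lemma multipliable_locFactor {P : Type*} (N : P → ℕ) (hN : ∀ p, 1 < N p) (h : ℕ)
    (hsum : ∀ σ : ℝ, 1 < σ → Summable fun q : P => (N q : ℝ) ^ (-σ))
    (s : ℝ) (hs : 1 < (h + 1) * s) :
    Multipliable fun q => locFactor h ((N q : ℝ) ^ (-s)) := by
  unfold locFactor
  have hs0 : 0 < s := by
    by_contra hneg
    have : (h + 1 : ℝ) * s ≤ 0 := mul_nonpos_of_nonneg_of_nonpos (by positivity) (by linarith)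
    linarith
  refine Real.multipliable_one_add_of_summable ?_
  refine Summable.of_nonneg_of_le (fun q => Finset.sum_nonneg fun _ _ => by positivity) (fun q => ?_)
    ((hsum _ hs).mul_left ((Finset.Ico (h + 1) (2 * h)).card : ℝ))
  have hn : (1 : ℝ) < N q := by exact_mod_cast hN q
  have hu := rpow_pos_lt_one hn hs0
  rw [← nsmul_eq_mul]
  refine Finset.sum_le_card_nsmul _ _ _ fun k hk => ?_
  have hk' := (Finset.mem_Ico.1 hk).1
  refine (pow_le_pow_of_le_one hu.1.le hu.2.le hk').trans (le_of_eq ?_)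
  rw [← Real.rpow_natCast, ← Real.rpow_mul (by linarith)]
  congr 1
  push_cast
  ring

/-- The sum of a completely multiplicative function over the remainders `d`. -/
lemma hasSum_rem {P : Type*} (h : ℕ) (𝔭 : P) (u : P → ℝ) (hu : ∀ q, 0 ≤ u q) (hh : 2 ≤ h)
    (hm : Multipliable fun q => locFactor h (u q)) :
    HasSum (fun d : {d : P →₀ ℕ // ∀ q, d q ∈ remExp h 𝔭 q} => d.1.prod fun q k => u q ^ k)
      ((∏' q, locFactor h (u q)) *
        ((∑ k ∈ Finset.range h, u 𝔭 ^ k) / locFactor h (u 𝔭))) := by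
  classical
  apply hasSum_euler u hu
  · intro q
    rw [mem_remExp]
    by_cases hq : q = 𝔭
    · exact Or.inl ⟨hq, by omega⟩
    · exact Or.inr ⟨hq, Or.inl rfl⟩
  · simp only [sum_remExp h 𝔭 _ u hu]
    exact hm.hasProd.mul (hasProd_ite_eq 𝔭 _)

/-! ### The asymptotic count -/

/-- The counting axiom, with a larger exponent and extended to all `y > 0`. -/
lemma cnt_bound {P : Type*} (N : P → ℕ) (hN : ∀ p, 1 < N p)
    (κ : ℝ) (hκ : 0 < κ) (θ C ν : ℝ) (hθν : θ ≤ ν) (hν1 : ν < 1)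
    (hcount : ∀ x : ℝ, 1 ≤ x → |cnt N x - κ * x| ≤ C * x ^ θ) (y : ℝ) (hy : 0 < y) :
    |cnt N y - κ * y| ≤ max C κ * y ^ ν := by
  rcases le_or_gt 1 y with h1 | h1
  · refine (hcount y h1).trans ?_
    have h2 : y ^ θ ≤ y ^ ν := Real.rpow_le_rpow_of_exponent_le h1 hθν
    have h3 : 0 ≤ y ^ θ := by positivity
    calc C * y ^ θ ≤ max C κ * y ^ θ := mul_le_mul_of_nonneg_right (le_max_left _ _) h3
      _ ≤ max C κ * y ^ ν := mul_le_mul_of_nonneg_left h2 (hκ.le.trans (le_max_right _ _))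
  · -- for `y < 1` nothing is counted and `y ≤ y ^ ν`
    have h0 : cnt N y = 0 := by
      rw [cnt, Nat.cast_eq_zero]
      convert! Set.ncard_empty (P →₀ ℕ)
      rw [Set.eq_empty_iff_forall_notMem]
      intro m hm
      rw [Set.mem_ofPred_eq] at hm
      have : (1 : ℝ) ≤ mnorm N m := by exact_mod_cast one_le_mnorm N hN m
      linarith
    rw [h0, zero_sub, abs_neg, abs_of_pos (by positivity)]
    have h2 : y ≤ y ^ ν := by
      simpa using Real.rpow_le_rpow_of_exponent_ge hy h1.le hν1.le
    exact mul_le_mul (le_max_right _ _) h2 hy.le (hκ.le.trans (le_max_right _ _))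

/-- Under the counting axiom, the number of `h`-full elements `m` with `N(m) ≤ x` and
`n_𝔭(m) ≥ 1` equals `κ γ_h x^{1/h} / (N(𝔭)(1 − N(𝔭)^{−1/h} + N(𝔭)^{−1})) + O_h(x^{ν/h}/N(𝔭)^ν)`
for some `ν < 1` independent of `𝔭`. -/
theorem hfull_count_divisible_by_prime {P : Type*} [Countable P]
    (N : P → ℕ) (hN : ∀ p, 1 < N p) (h : ℕ) (hh : 2 ≤ h)
    (κ : ℝ) (hκ : 0 < κ) (θ : ℝ) (hθ0 : 0 ≤ θ) (hθ1 : θ < 1) (C : ℝ)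
    (hcount : ∀ x : ℝ, 1 ≤ x →
      {m : P →₀ ℕ | (mnorm N m : ℝ) ≤ x}.Finite ∧
      |({m : P →₀ ℕ | (mnorm N m : ℝ) ≤ x}.ncard : ℝ) - κ * x| ≤ C * x ^ θ) :
    ∃ ν : ℝ, ν < 1 ∧ ∃ D : ℝ, ∀ 𝔭 : P, ∀ x : ℝ, 2 ≤ x →
      {m : P →₀ ℕ | (∀ p, m p = 0 ∨ h ≤ m p) ∧ 1 ≤ m 𝔭 ∧ (mnorm N m : ℝ) ≤ x}.Finite ∧
      |({m : P →₀ ℕ | (∀ p, m p = 0 ∨ h ≤ m p) ∧ 1 ≤ m 𝔭 ∧ (mnorm N m : ℝ) ≤ x}.ncard : ℝ)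
          - κ * (∏' p : P, (1 + ((N p : ℝ) - (N p : ℝ) ^ (1 / (h : ℝ)))
              / ((N p : ℝ) ^ 2 * ((N p : ℝ) ^ (1 / (h : ℝ)) - 1))))
            * x ^ (1 / (h : ℝ))
            / ((N 𝔭 : ℝ) * (1 - (N 𝔭 : ℝ) ^ (-(1 / (h : ℝ))) + (N 𝔭 : ℝ)⁻¹))|
        ≤ D * x ^ (ν / (h : ℝ)) / (N 𝔭 : ℝ) ^ ν := by
  have hh0 : (0 : ℝ) < h := by positivity
  have hN' : ∀ q, (1 : ℝ) < N q := fun q => by exact_mod_cast hN q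
  have hC : 0 ≤ C := by
    have h1 := (abs_nonneg _).trans (hcount 1 le_rfl).2
    simpa using h1
  have hfin : ∀ y : ℝ, {m : P →₀ ℕ | (mnorm N m : ℝ) ≤ y}.Finite := fun y =>
    (hcount (max 1 y) (le_max_left _ _)).1.subset fun m hm =>
      le_trans (show (mnorm N m : ℝ) ≤ y from hm) (le_max_right _ _)
  have hsum := summable_primes N hN (κ + C) fun x hx => by
    refine ⟨hfin x, ?_⟩
    have h1 := (le_abs_self _).trans (hcount x hx).2
    have h2 : x ^ θ ≤ x := by
      simpa using Real.rpow_le_rpow_of_exponent_le hx hθ1.le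
    have h3 := mul_le_mul_of_nonneg_left h2 hC
    rw [cnt]
    linarith
  -- any `ν ≥ θ` with `h / (h + 1) < ν < 1` makes the error series converge
  obtain ⟨ν, hν, hν1⟩ : ∃ ν : ℝ, max θ (h / (h + 1)) < ν ∧ ν < 1 :=
    exists_between (max_lt hθ1 ((div_lt_one (by positivity)).2 (by linarith)))
  have hθν : θ ≤ ν := (le_max_left _ _).trans hν.le
  have hνh : (h : ℝ) / (h + 1) < ν := (le_max_right _ _).trans_lt hν
  have hν0 : 0 < ν := lt_of_le_of_lt (by positivity) hνh
  rw [div_lt_iff₀ (by positivity)] at hνh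
  have hm1 : Multipliable fun q => locFactor h ((N q : ℝ) ^ (-(1 / (h : ℝ)))) := by
    apply multipliable_locFactor N hN h hsum
    rw [mul_one_div, lt_div_iff₀ hh0]
    linarith
  have hmν : Multipliable fun q => locFactor h ((N q : ℝ) ^ (-(ν / (h : ℝ)))) := by
    apply multipliable_locFactor N hN h hsum
    rw [← mul_div_assoc, lt_div_iff₀ hh0]
    linarith
  set Gν := ∏' q, locFactor h ((N q : ℝ) ^ (-(ν / (h : ℝ)))) with hGν
  have hGν0 : 0 ≤ Gν := by
    refine ge_of_tendsto' hmν.hasProd fun S => Finset.prod_nonneg fun q _ => ?_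
    exact zero_le_one.trans (one_le_locFactor h (by positivity))
  refine ⟨ν, hν1, max C κ * (Gν * h), fun 𝔭 x hx => ⟨(hfin x).subset fun m hm => hm.2.2, ?_⟩⟩
  have hx0 : 0 < x := by linarith
  have hp := hN' 𝔭
  have hp0 : (0 : ℝ) < N 𝔭 := by linarith
  set X := x ^ (1 / (h : ℝ)) / N 𝔭 with hX
  have hX0 : 0 < X := by positivity
  have hA := hasSum_count N hN hh hfin 𝔭 x hx0.le
  have hB := (hasSum_rem h 𝔭 _ (fun q => by positivity) hh hm1).mul_left (κ * X)
  have hE := (hasSum_rem h 𝔭 _ (fun q => by positivity) hh hmν).mul_left (max C κ * X ^ ν)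
  rw [← hX] at hA
  have hkey := (hA.sub hB).norm_le_of_bounded hE fun d => by
    rw [Real.norm_eq_abs]
    have hw : 0 < mnorm N d.1 := one_le_mnorm N hN d.1
    have hw' : (0 : ℝ) < mnorm N d.1 := by exact_mod_cast hw
    rw [← rpow_mnorm, ← rpow_mnorm, mul_assoc κ]
    refine (cnt_bound N hN κ hκ θ C ν hθν hν1 (fun y hy => (hcount y hy).2) _
      (by positivity)).trans (le_of_eq ?_)
    rw [Real.mul_rpow hX0.le (by positivity), ← Real.rpow_mul hw'.le, mul_assoc]
    congr 3
    ring
  rw [← hGν, Real.norm_eq_abs] at hkey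
  have hu1 := rpow_pos_lt_one hp (show 0 < 1 / (h : ℝ) by positivity)
  have hup : ((N 𝔭 : ℝ) ^ (-(1 / (h : ℝ)))) ^ h = (N 𝔭 : ℝ)⁻¹ := by
    rw [Real.rpow_neg hp0.le, inv_pow, one_div, Real.rpow_inv_natCast_pow hp0.le (by omega)]
  rw [ratio_eq hh hu1.1 hu1.2, hup, tprod_congr fun q => locFactor_eq hh (hN' q)] at hkey
  have hden : 0 < 1 - (N 𝔭 : ℝ) ^ (-(1 / (h : ℝ))) + (N 𝔭 : ℝ)⁻¹ := by
    have : 0 < (N 𝔭 : ℝ)⁻¹ := by positivity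
    linarith [hu1.2]
  refine le_trans (le_of_eq ?_) (hkey.trans ?_)
  · congr 2
    rw [hX]
    field_simp
  · have huν := rpow_pos_lt_one hp (show 0 < ν / (h : ℝ) by positivity)
    have hr : (∑ k ∈ Finset.range h, ((N 𝔭 : ℝ) ^ (-(ν / (h : ℝ)))) ^ k) /
        locFactor h ((N 𝔭 : ℝ) ^ (-(ν / (h : ℝ)))) ≤ h := by
      refine (div_le_self (Finset.sum_nonneg fun _ _ => by positivity)
        (one_le_locFactor h huν.1.le)).trans ?_
      refine (Finset.sum_le_card_nsmul _ _ 1 fun k _ => pow_le_one₀ huν.1.le huν.2.le).trans ?_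
      simp
    have hXν : X ^ ν = x ^ (ν / (h : ℝ)) / (N 𝔭 : ℝ) ^ ν := by
      rw [hX, Real.div_rpow (by positivity) hp0.le, ← Real.rpow_mul hx0.le, one_div_mul_eq_div]
    have hM : 0 ≤ max C κ := hC.trans (le_max_left _ _)
    calc _ ≤ max C κ * X ^ ν * (Gν * h) :=
          mul_le_mul_of_nonneg_left (mul_le_mul_of_nonneg_left hr hGν0) (by positivity)
      _ = _ := by rw [hXν]; ring
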